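/- arXiv:1810.06234 — 2 statements merged into one kernel-verified Lean document; each statement's English description precedes it below -/
import Mathlib

section
/- Almost surely, τ̂^{(1)}_{1,2|Z=z} + s_n(z) = τ̂^{(2)}_{1,2|Z=z} = τ̂^{(3)}_{1,2|Z=z} − s_n(z), where s_n(z) = Σ_{i=1}^n w_{i,n}(z)². -/
open MeasureTheory ProbabilityTheory Filter Real
open scoped ENNReal NNReal BigOperators

noncomputable section

/-- Rescaled kernel `K_h(u) = h^{-p} K(u/h)`. -/
def kh (p : ℕ) (K : (Fin p → ℝ) → ℝ) (h : ℝ) (u : Fin p → ℝ) : ℝ :=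
  (h ^ p)⁻¹ * K (h⁻¹ • u)

/-- Nadaraya-Watson weights `w_{i,n}(z)`. -/
def nwWeight (p n : ℕ) {Ω : Type*} (K : (Fin p → ℝ) → ℝ) (h : ℝ)
    (Z : Fin n → Ω → (Fin p → ℝ)) (i : Fin n) (z : Fin p → ℝ) (ω : Ω) : ℝ :=
  kh p K h (Z i ω - z) / ∑ j : Fin n, kh p K h (Z j ω - z)

/-- The estimator `τ̂⁽¹⁾_{1,2|Z=z}`. -/
def tauHat1 (p n : ℕ) {Ω : Type*} (K : (Fin p → ℝ) → ℝ) (h : ℝ)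
    (X : Fin n → Ω → ℝ × ℝ) (Z : Fin n → Ω → (Fin p → ℝ)) (z : Fin p → ℝ) (ω : Ω) : ℝ :=
  4 * ∑ i : Fin n, ∑ j : Fin n, nwWeight p n K h Z i z ω * nwWeight p n K h Z j z ω *
    (if (X i ω).1 < (X j ω).1 ∧ (X i ω).2 < (X j ω).2 then (1 : ℝ) else 0) - 1

/-- The estimator `τ̂⁽²⁾_{1,2|Z=z}`. -/
def tauHat2 (p n : ℕ) {Ω : Type*} (K : (Fin p → ℝ) → ℝ) (h : ℝ)
    (X : Fin n → Ω → ℝ × ℝ) (Z : Fin n → Ω → (Fin p → ℝ)) (z : Fin p → ℝ) (ω : Ω) : ℝ :=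
  ∑ i : Fin n, ∑ j : Fin n, nwWeight p n K h Z i z ω * nwWeight p n K h Z j z ω *
    ((if 0 < ((X i ω).1 - (X j ω).1) * ((X i ω).2 - (X j ω).2) then (1 : ℝ) else 0)
      - (if ((X i ω).1 - (X j ω).1) * ((X i ω).2 - (X j ω).2) < 0 then (1 : ℝ) else 0))

/-- The estimator `τ̂⁽³⁾_{1,2|Z=z}`. -/
def tauHat3 (p n : ℕ) {Ω : Type*} (K : (Fin p → ℝ) → ℝ) (h : ℝ)
    (X : Fin n → Ω → ℝ × ℝ) (Z : Fin n → Ω → (Fin p → ℝ)) (z : Fin p → ℝ) (ω : Ω) : ℝ :=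
  1 - 4 * ∑ i : Fin n, ∑ j : Fin n, nwWeight p n K h Z i z ω * nwWeight p n K h Z j z ω *
    (if (X i ω).1 < (X j ω).1 ∧ (X j ω).2 < (X i ω).2 then (1 : ℝ) else 0)

/-- `s_n(z) = Σ_i w_{i,n}(z)²`. -/
def sn (p n : ℕ) {Ω : Type*} (K : (Fin p → ℝ) → ℝ) (h : ℝ)
    (Z : Fin n → Ω → (Fin p → ℝ)) (z : Fin p → ℝ) (ω : Ω) : ℝ :=
  ∑ i : Fin n, (nwWeight p n K h Z i z ω) ^ 2

/-!
Let `C` and `D` be the total weights `∑ w i * w j` of the concordant and of the discordant unordered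
pairs. Then `τ̂⁽¹⁾ = 4 C - 1`, `τ̂⁽²⁾ = 2 C - 2 D` and `τ̂⁽³⁾ = 1 - 4 D`. Since the weights sum to
one and, without ties, every off-diagonal pair is either concordant or discordant, expanding
`(∑ w i) ^ 2 = 1` gives `2 C + 2 D = 1 - s_n`; the diagonal accounts for `s_n`.
-/

section PairMass

variable {ι R : Type*} [Fintype ι] [CommSemiring R]

/-- The total weight `∑ w i * w j` of the ordered pairs `(i, j)` related by `r`. The estimators
`τ̂⁽ᵏ⁾` are all affine combinations of such masses. -/
def pairMass (w : ι → R) (r : ι → ι → Prop) [DecidableRel r] : R :=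
  ∑ i, ∑ j, w i * w j * if r i j then 1 else 0

variable (w : ι → R) (r s : ι → ι → Prop) [DecidableRel r] [DecidableRel s]

variable {r s} in
theorem pairMass_congr (h : ∀ i j, r i j ↔ s i j) : pairMass w r = pairMass w s := by
  simp only [pairMass, h]

theorem pairMass_of_forall (h : ∀ i j, r i j) : pairMass w r = (∑ i, w i) ^ 2 := by
  simp only [pairMass, h, if_true, mul_one, sq, Finset.sum_mul_sum]

theorem pairMass_diagonal [DecidableEq ι] : pairMass w (· = ·) = ∑ i, w i ^ 2 := by
  simp only [pairMass, mul_ite, mul_one, mul_zero, Finset.sum_ite_eq, Finset.mem_univ, if_true, sq]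

theorem pairMass_swap : pairMass w (fun i j => r j i) = pairMass w r := by
  unfold pairMass
  rw [Finset.sum_comm]
  simp only [mul_comm (w _) (w _)]

variable {r s} in
theorem pairMass_or (h : ∀ i j, r i j → ¬s i j) :
    pairMass w (fun i j => r i j ∨ s i j) = pairMass w r + pairMass w s := by
  simp only [pairMass, ← Finset.sum_add_distrib, ← mul_add]
  refine Finset.sum_congr rfl fun i _ => Finset.sum_congr rfl fun j _ => ?_
  by_cases hr : r i j
  · simp [hr, h i j hr]
  · simp [hr]

variable {r} in
theorem pairMass_or_swap (h : ∀ i j, r i j → ¬r j i) :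
    pairMass w (fun i j => r i j ∨ r j i) = 2 * pairMass w r := by
  rw [pairMass_or w h, pairMass_swap, two_mul]

end PairMass

section Concordance

variable {ι R α β : Type*} [Fintype ι] [CommSemiring R]

/-- The weight of the ordered pairs along which both `x` and `y` increase. Each unordered
concordant pair is counted once. -/
def concordantMass [LT α] [DecidableLT α] [LT β] [DecidableLT β]
    (w : ι → R) (x : ι → α) (y : ι → β) : R :=
  pairMass w fun i j => x i < x j ∧ y i < y j

/-- The weight of the ordered pairs along which `x` increases and `y` decreases. Each unordered
discordant pair is counted once. -/
def discordantMass [LT α] [DecidableLT α] [LT β] [DecidableLT β]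
    (w : ι → R) (x : ι → α) (y : ι → β) : R :=
  pairMass w fun i j => x i < x j ∧ y j < y i

theorem two_mul_concordantMass_add_two_mul_discordantMass_add_sum_sq
    [LinearOrder α] [LinearOrder β] (w : ι → R) {x : ι → α} {y : ι → β}
    (hx : x.Injective) (hy : y.Injective) :
    2 * concordantMass w x y + 2 * discordantMass w x y + ∑ i, w i ^ 2 = (∑ i, w i) ^ 2 := by
  classical
  have concordant_or_discordant_or_eq (i j : ι) :
      ((x i < x j ∧ y i < y j ∨ x j < x i ∧ y j < y i) ∨
        (x i < x j ∧ y j < y i ∨ x j < x i ∧ y i < y j)) ∨ i = j := by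
    obtain rfl | hij := eq_or_ne i j
    · exact .inr rfl
    · rcases (hx.ne hij).lt_or_gt with hx | hx <;> rcases (hy.ne hij).lt_or_gt with hy | hy <;>
        simp [hx, hy]
  calc
    2 * concordantMass w x y + 2 * discordantMass w x y + ∑ i, w i ^ 2
    _ = pairMass w (fun i j => x i < x j ∧ y i < y j ∨ x j < x i ∧ y j < y i) +
          pairMass w (fun i j => x i < x j ∧ y j < y i ∨ x j < x i ∧ y i < y j) +
          pairMass w (· = ·) := by
      rw [concordantMass, discordantMass, ← pairMass_or_swap w fun i j h h' => h.1.asymm h'.1,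
        ← pairMass_or_swap w fun i j h h' => h.1.asymm h'.1, pairMass_diagonal]
    _ = pairMass w (fun i j =>
          ((x i < x j ∧ y i < y j ∨ x j < x i ∧ y j < y i) ∨
            (x i < x j ∧ y j < y i ∨ x j < x i ∧ y i < y j)) ∨ i = j) := by
      rw [← pairMass_or w (by grind), ← pairMass_or w (by grind)]
    _ = (∑ i, w i) ^ 2 := pairMass_of_forall w _ concordant_or_discordant_or_eq

variable {𝕜 : Type*} [Ring 𝕜] [LinearOrder 𝕜] [IsStrictOrderedRing 𝕜]

theorem pairMass_mul_sub_pos (w : ι → R) (x y : ι → 𝕜) :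
    pairMass w (fun i j => 0 < (x i - x j) * (y i - y j)) = 2 * concordantMass w x y := by
  rw [concordantMass, ← pairMass_or_swap w fun i j h h' => h.1.asymm h'.1]
  refine pairMass_congr w fun i j => ?_
  rw [mul_pos_iff, sub_pos, sub_pos, sub_neg, sub_neg, or_comm]

theorem pairMass_mul_sub_neg (w : ι → R) (x y : ι → 𝕜) :
    pairMass w (fun i j => (x i - x j) * (y i - y j) < 0) = 2 * discordantMass w x y := by
  rw [discordantMass, ← pairMass_or_swap w fun i j h h' => h.1.asymm h'.1]
  refine pairMass_congr w fun i j => ?_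
  rw [mul_neg_iff, sub_pos, sub_pos, sub_neg, sub_neg, or_comm]

end Concordance

section Estimators

variable {Ω : Type*} {p n : ℕ} (K : (Fin p → ℝ) → ℝ) (h : ℝ) (X : Fin n → Ω → ℝ × ℝ)
  (Z : Fin n → Ω → (Fin p → ℝ)) (z : Fin p → ℝ) (ω : Ω)

variable {K h Z z ω} in
theorem sum_nwWeight_eq_one (hden : ∑ j, kh p K h (Z j ω - z) ≠ 0) :
    ∑ i, nwWeight p n K h Z i z ω = 1 := by
  simp only [nwWeight, ← Finset.sum_div, div_self hden]

theorem tauHat1_eq_concordantMass :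
    tauHat1 p n K h X Z z ω =
      4 * concordantMass (nwWeight p n K h Z · z ω)
        (fun i => (X i ω).1) (fun i => (X i ω).2) - 1 :=
  rfl

theorem tauHat2_eq_concordantMass_sub_discordantMass :
    tauHat2 p n K h X Z z ω =
      2 * concordantMass (nwWeight p n K h Z · z ω) (fun i => (X i ω).1) (fun i => (X i ω).2) -
        2 * discordantMass (nwWeight p n K h Z · z ω)
          (fun i => (X i ω).1) (fun i => (X i ω).2) := by
  simp only [← pairMass_mul_sub_pos, ← pairMass_mul_sub_neg, tauHat2, pairMass, mul_sub,
    Finset.sum_sub_distrib]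

theorem tauHat3_eq_discordantMass :
    tauHat3 p n K h X Z z ω =
      1 - 4 * discordantMass (nwWeight p n K h Z · z ω)
        (fun i => (X i ω).1) (fun i => (X i ω).2) :=
  rfl

variable {K h X Z z ω}

theorem tauHat_relationship_general
    (hX₁ : Function.Injective fun i => (X i ω).1) (hX₂ : Function.Injective fun i => (X i ω).2)
    (hden : ∑ j, kh p K h (Z j ω - z) ≠ 0) :
    tauHat1 p n K h X Z z ω + sn p n K h Z z ω = tauHat2 p n K h X Z z ω ∧
      tauHat2 p n K h X Z z ω = tauHat3 p n K h X Z z ω - sn p n K h Z z ω := by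
  have masses_add_sn_eq_one := two_mul_concordantMass_add_two_mul_discordantMass_add_sum_sq
    (nwWeight p n K h Z · z ω) hX₁ hX₂
  rw [sum_nwWeight_eq_one hden] at masses_add_sn_eq_one
  rw [tauHat1_eq_concordantMass, tauHat2_eq_concordantMass_sub_discordantMass,
    tauHat3_eq_discordantMass, sn]
  constructor <;> linear_combination masses_add_sn_eq_one

end Estimators

/-- Proposition 1 of the paper: almost surely,
`τ̂⁽¹⁾ + s_n = τ̂⁽²⁾ = τ̂⁽³⁾ − s_n`. -/
theorem tauHat_relationship
    {Ω : Type*} [MeasurableSpace Ω] (P : Measure Ω) [IsProbabilityMeasure P]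
    (p n : ℕ) (hn : 2 ≤ n) (K : (Fin p → ℝ) → ℝ) (h : ℝ) (hh : 0 < h)
    (X : Fin n → Ω → ℝ × ℝ) (Z : Fin n → Ω → (Fin p → ℝ)) (z : Fin p → ℝ)
    -- the sample is i.i.d. from a continuous distribution: ties occur with probability 0
    (hties : ∀ᵐ ω ∂P, ∀ i j : Fin n, i ≠ j →
      (X i ω).1 ≠ (X j ω).1 ∧ (X i ω).2 ≠ (X j ω).2)
    -- the weights are well-defined: the denominator is positive
    (hden : ∀ᵐ ω ∂P, 0 < ∑ j : Fin n, kh p K h (Z j ω - z)) :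
    ∀ᵐ ω ∂P,
      tauHat1 p n K h X Z z ω + sn p n K h Z z ω = tauHat2 p n K h X Z z ω ∧
      tauHat2 p n K h X Z z ω = tauHat3 p n K h X Z z ω - sn p n K h Z z ω := by
  filter_upwards [hties, hden] with ω hties hden
  exact tauHat_relationship_general (fun i j hij => by_contra fun hne => (hties i j hne).1 hij)
    (fun i j hij => by_contra fun hne => (hties i j hne).2 hij) hden.ne'
end
end

section
/- (Berk's inequality for U-statistics.) Let m, n be positive integers with n ≥ m, X_1, …, X_n i.i.d. random vectors with values in a measurable space 𝒳, and g : 𝒳^m → [a, b] a symmetric real bounded measurable function. Set θ = E[g(X_1, …, X_m)] and σ² = Var[g(X_1, …, X_m)]. Then for any t > 0, P(binom(n,m)^{−1} Σ_c g(X_{i_1}, …, X_{i_m}) − θ ≥ t) ≤ exp(− ⌊n/m⌋ t² / (2σ² + (2/3)(b − θ) t)), where Σ_c denotes the sum over all subsets {i_1 < ⋯ < i_m} of m distinct integers in {1, …, n}. -/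
open MeasureTheory ProbabilityTheory Filter Real
open scoped ENNReal NNReal BigOperators Classical

noncomputable section

/-!
Following Hoeffding, fix `k = ⌊n / m⌋` disjoint blocks of `m` indices. By symmetry of the kernel,
the U-statistic is the average, over all permutations of the sample, of the mean of the kernel over
the `k` blocks. Each block mean is an average of `k` i.i.d. variables, so Bernstein's bound on the
moment generating function of the centred kernel carries over to it with the variance and the range
divided by `k`. Convexity of the exponential transfers the bound to the average over permutations,
although its terms are dependent, and Chernoff's method turns it into the tail bound.
-/

section Exponential

theorem exp_le_one_add_add_sq_div_of_nonneg {x : ℝ} (hx : 0 ≤ x) (hx3 : x < 3) :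
    exp x ≤ 1 + x + x ^ 2 / (2 * (1 - x / 3)) := by
  have hexp : HasSum (fun n : ℕ ↦ x ^ n / (n.factorial : ℝ)) (exp x) := by
    rw [exp_eq_exp_ℝ]
    exact NormedSpace.expSeries_div_hasSum_exp x
  have htail : HasSum (fun n : ℕ ↦ x ^ (n + 2) / ((n + 2).factorial : ℝ)) (exp x - (1 + x)) := by
    simpa [Finset.sum_range_succ] using (hasSum_nat_add_iff' 2).2 hexp
  have hgeom : HasSum (fun n : ℕ ↦ x ^ 2 / 2 * (x / 3) ^ n) (x ^ 2 / 2 * (1 - x / 3)⁻¹) :=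
    (hasSum_geometric_of_lt_one (by positivity) (by linarith)).mul_left _
  have hterm (n : ℕ) : x ^ (n + 2) / ((n + 2).factorial : ℝ) ≤ x ^ 2 / 2 * (x / 3) ^ n := by
    have hfactorial : (2 * 3 ^ n : ℝ) ≤ (n + 2).factorial := by
      rw [add_comm n]
      exact_mod_cast Nat.factorial_mul_pow_le_factorial (m := 2) (n := n)
    calc x ^ (n + 2) / ((n + 2).factorial : ℝ) ≤ x ^ (n + 2) / (2 * 3 ^ n) := by gcongr
      _ = x ^ 2 / 2 * (x / 3) ^ n := by rw [div_pow, pow_add]; field_simp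
  have hle := hasSum_le hterm htail hgeom
  rw [← div_eq_mul_inv, div_div] at hle
  linarith

theorem exp_le_one_add_add_sq_div_two_of_nonpos {x : ℝ} (hx : x ≤ 0) :
    exp x ≤ 1 + x + x ^ 2 / 2 := by
  have hquad : 1 - x + x ^ 2 / 2 ≤ exp (-x) := by
    simpa [sub_eq_add_neg] using quadratic_le_exp_of_nonneg (neg_nonneg.2 hx)
  have hpos : 0 < 1 - x + x ^ 2 / 2 := by nlinarith
  calc exp x = (exp (-x))⁻¹ := by rw [exp_neg, inv_inv]
    _ ≤ (1 - x + x ^ 2 / 2)⁻¹ := inv_anti₀ hpos hquad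
    _ ≤ 1 + x + x ^ 2 / 2 := by
      rw [inv_le_iff_one_le_mul₀ hpos]
      nlinarith [sq_nonneg (x ^ 2)]

theorem exp_le_one_add_add_sq_div {x c : ℝ} (hxc : x ≤ c) (hc : 0 ≤ c) (hc3 : c < 3) :
    exp x ≤ 1 + x + x ^ 2 / (2 * (1 - c / 3)) := by
  rcases le_total 0 x with hx | hx
  · calc exp x ≤ 1 + x + x ^ 2 / (2 * (1 - x / 3)) :=
          exp_le_one_add_add_sq_div_of_nonneg hx (by linarith)
      _ ≤ 1 + x + x ^ 2 / (2 * (1 - c / 3)) := by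
          have : 0 < 1 - c / 3 := by linarith
          gcongr
  · calc exp x ≤ 1 + x + x ^ 2 / 2 := exp_le_one_add_add_sq_div_two_of_nonpos hx
      _ ≤ 1 + x + x ^ 2 / (2 * (1 - c / 3)) := by
          have : 0 < 2 * (1 - c / 3) := by linarith
          gcongr
          linarith

end Exponential

section SubGamma

variable {Ω : Type*} [MeasurableSpace Ω] {μ : Measure Ω} {X : Ω → ℝ} {v c : ℝ}

/-- One-sided sub-gamma variables, with variance factor `v` and scale `c`: the condition under
which Chernoff's method yields Bernstein-type upper tails. As in Boucheron, Lugosi and Massart, the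
bound is required only for `0 ≤ t` with `t * c < 1`; centring is not part of the definition. -/
structure HasSubGammaMGF (X : Ω → ℝ) (v c : ℝ) (μ : Measure Ω) : Prop where
  integrable_exp_mul : ∀ t, 0 ≤ t → t * c < 1 → Integrable (fun ω ↦ exp (t * X ω)) μ
  mgf_le : ∀ t, 0 ≤ t → t * c < 1 → mgf X μ t ≤ exp (t ^ 2 * v / (2 * (1 - t * c)))

theorem exists_subGamma_exponent_le {v c t : ℝ} (hv : 0 ≤ v) (hc : 0 ≤ c) (ht : 0 < t)
    (hvc : 0 < v + c * t) :
    ∃ s : ℝ, 0 ≤ s ∧ s * c < 1 ∧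
      -s * t + s ^ 2 * v / (2 * (1 - s * c)) ≤ -t ^ 2 / (2 * (v + c * t)) := by
  -- Bernstein's choice `s = t / (v + c * t)` is the excluded pole `1 / c` when `v = 0`; the
  -- quadratic term then vanishes and `s = 1 / (2 * c)` suffices.
  rcases hv.eq_or_lt with rfl | hv
  · have hc : 0 < c := pos_of_mul_pos_left (by simpa using hvc) ht.le
    refine ⟨1 / (2 * c), by positivity, ?_, le_of_eq ?_⟩
    · field_simp
      norm_num
    · field_simp
      ring
  · refine ⟨t / (v + c * t), by positivity, ?_, le_of_eq ?_⟩
    · rw [div_mul_eq_mul_div, div_lt_one hvc]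
      linarith
    · have hslack : 1 - t / (v + c * t) * c = v / (v + c * t) := by
        field_simp
        ring
      rw [hslack]
      field_simp
      ring

namespace HasSubGammaMGF

theorem measure_ge_le [IsProbabilityMeasure μ] (h : HasSubGammaMGF X v c μ) (hv : 0 ≤ v)
    (hc : 0 ≤ c) {t : ℝ} (ht : 0 < t) :
    μ.real {ω | t ≤ X ω} ≤ exp (-t ^ 2 / (2 * (v + c * t))) := by
  have hvc : 0 ≤ v + c * t := by positivity
  rcases hvc.eq_or_lt with hvc | hvc
  -- The exponent has denominator zero here, hence the bound is the trivial `exp 0 = 1`.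
  · simp [← hvc]
  obtain ⟨s, hs, hsc, hexponent⟩ := exists_subGamma_exponent_le hv hc ht hvc
  calc μ.real {ω | t ≤ X ω} ≤ exp (-s * t) * mgf X μ s :=
        measure_ge_le_exp_mul_mgf t hs (h.integrable_exp_mul s hs hsc)
    _ ≤ exp (-s * t) * exp (s ^ 2 * v / (2 * (1 - s * c))) := by
        gcongr
        exact h.mgf_le s hs hsc
    _ = exp (-s * t + s ^ 2 * v / (2 * (1 - s * c))) := (exp_add _ _).symm
    _ ≤ exp (-t ^ 2 / (2 * (v + c * t))) := exp_le_exp.2 hexponent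

theorem of_identDistrib {Ω' : Type*} [MeasurableSpace Ω'] {ν : Measure Ω'} {Y : Ω' → ℝ}
    (h : HasSubGammaMGF X v c μ) (hXY : IdentDistrib X Y μ ν) : HasSubGammaMGF Y v c ν where
  integrable_exp_mul t ht htc :=
    (hXY.comp (measurable_const_mul t).exp).integrable_snd (h.integrable_exp_mul t ht htc)
  mgf_le t ht htc := mgf_congr_of_identDistrib X Y hXY t ▸ h.mgf_le t ht htc

theorem const_mul (h : HasSubGammaMGF X v c μ) {a : ℝ} (ha : 0 ≤ a) :
    HasSubGammaMGF (fun ω ↦ a * X ω) (a ^ 2 * v) (a * c) μ where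
  integrable_exp_mul t ht htc := by
    simpa only [← mul_assoc, mul_comm a t] using
      h.integrable_exp_mul (t * a) (by positivity) (by linarith)
  mgf_le t ht htc := by
    rw [mgf_const_mul, mul_comm a t]
    convert h.mgf_le (t * a) (by positivity) (by linarith) using 2
    ring

theorem sum_of_iIndepFun [IsFiniteMeasure μ] {ι : Type*} {X : ι → Ω → ℝ} {v : ι → ℝ}
    (hindep : iIndepFun X μ) (hmeas : ∀ i, Measurable (X i)) {s : Finset ι}
    (h : ∀ i ∈ s, HasSubGammaMGF (X i) (v i) c μ) :
    HasSubGammaMGF (fun ω ↦ ∑ i ∈ s, X i ω) (∑ i ∈ s, v i) c μ where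
  integrable_exp_mul t ht htc := by
    simpa only [Finset.sum_apply] using
      hindep.integrable_exp_mul_sum hmeas fun i hi ↦ (h i hi).integrable_exp_mul t ht htc
  mgf_le t ht htc := by
    rw [← Finset.sum_fn, hindep.mgf_sum hmeas, Finset.mul_sum, Finset.sum_div, exp_sum]
    exact Finset.prod_le_prod (fun _ _ ↦ mgf_nonneg) fun i hi ↦ (h i hi).mgf_le t ht htc

end HasSubGammaMGF

theorem exp_mul_expect_le {ι : Type*} [Fintype ι] [Nonempty ι] (t : ℝ) (x : ι → ℝ) :
    exp (t * 𝔼 i, x i) ≤ 𝔼 i, exp (t * x i) := by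
  have hweights : ∑ _i : ι, (Fintype.card ι : ℝ)⁻¹ = 1 := by simp
  have hjensen := convexOn_exp.map_sum_le (t := Finset.univ) (p := fun i ↦ t * x i)
    (fun _ _ ↦ by positivity) hweights (fun _ _ ↦ Set.mem_univ _)
  rw [Finset.mul_expect]
  simpa only [Fintype.expect_eq_sum_div_card, Finset.sum_div, smul_eq_mul,
    inv_mul_eq_div] using hjensen

theorem HasSubGammaMGF.expect {ι : Type*} [Fintype ι] [Nonempty ι] {X : ι → Ω → ℝ}
    (hmeas : ∀ i, AEMeasurable (X i) μ) (h : ∀ i, HasSubGammaMGF (X i) v c μ) :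
    HasSubGammaMGF (fun ω ↦ 𝔼 i, X i ω) v c μ := by
  have hint (t : ℝ) (ht : 0 ≤ t) (htc : t * c < 1) :
      Integrable (fun ω ↦ 𝔼 i, exp (t * X i ω)) μ := by
    simp only [Fintype.expect_eq_sum_div_card]
    exact (integrable_finsetSum _ fun i _ ↦ (h i).integrable_exp_mul t ht htc).div_const _
  refine ⟨fun t ht htc ↦ (hint t ht htc).mono' ?_ ?_, fun t ht htc ↦ ?_⟩
  · simp only [Fintype.expect_eq_sum_div_card]
    fun_prop
  · refine ae_of_all _ fun ω ↦ ?_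
    rw [norm_of_nonneg (exp_pos _).le]
    exact exp_mul_expect_le t (X · ω)
  · calc mgf (fun ω ↦ 𝔼 i, X i ω) μ t ≤ ∫ ω, 𝔼 i, exp (t * X i ω) ∂μ :=
          integral_mono_of_nonneg (ae_of_all _ fun _ ↦ (exp_pos _).le) (hint t ht htc)
            (ae_of_all _ fun ω ↦ exp_mul_expect_le t (X · ω))
      _ = 𝔼 i, mgf (X i) μ t := by
          simp only [Fintype.expect_eq_sum_div_card, integral_div, mgf]
          rw [integral_finsetSum _ fun i _ ↦ (h i).integrable_exp_mul t ht htc]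
      _ ≤ exp (t ^ 2 * v / (2 * (1 - t * c))) :=
          Finset.expect_le Finset.univ_nonempty fun i _ ↦ (h i).mgf_le t ht htc

theorem integral_le_of_ae_le [IsProbabilityMeasure μ] {Y : Ω → ℝ} {b : ℝ} (hY : Integrable Y μ)
    (hb : ∀ᵐ ω ∂μ, Y ω ≤ b) : μ[Y] ≤ b := by
  simpa using integral_mono_ae hY (integrable_const b) hb

theorem mgf_le_exp_of_integral_eq_zero [IsProbabilityMeasure μ] {b t : ℝ} (hX : MemLp X 2 μ)
    (hX0 : μ[X] = 0) (hb : ∀ᵐ ω ∂μ, X ω ≤ b) (ht : 0 ≤ t) (htb : t * b < 3) :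
    mgf X μ t ≤ exp (t ^ 2 * variance X μ / (2 * (1 - t * b / 3))) := by
  have hint : Integrable X μ := hX.integrable one_le_two
  have hb0 : 0 ≤ b := hX0 ▸ integral_le_of_ae_le hint hb
  set K := t ^ 2 / (2 * (1 - t * b / 3)) with hK
  have hlin : Integrable (fun ω ↦ 1 + t * X ω) μ := (integrable_const 1).add (hint.const_mul t)
  have hsq : Integrable (fun ω ↦ K * X ω ^ 2) μ := hX.integrable_sq.const_mul K
  calc mgf X μ t ≤ ∫ ω, ((1 + t * X ω) + K * X ω ^ 2) ∂μ := by
        refine integral_mono_of_nonneg (ae_of_all _ fun _ ↦ (exp_pos _).le) (hlin.add hsq) ?_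
        filter_upwards [hb] with ω hω
        refine (exp_le_one_add_add_sq_div (c := t * b) (by gcongr) (by positivity) htb).trans_eq ?_
        rw [hK]
        ring
    _ = 1 + K * variance X μ := by
        rw [integral_add hlin hsq, integral_add (integrable_const 1) (hint.const_mul t),
          integral_const_mul, integral_const_mul, hX0,
          variance_of_integral_eq_zero hX.aemeasurable hX0]
        simp
    _ ≤ exp (K * variance X μ) := by
        rw [add_comm]
        exact add_one_le_exp _
    _ = exp (t ^ 2 * variance X μ / (2 * (1 - t * b / 3))) := by rw [hK, div_mul_eq_mul_div]

theorem hasSubGammaMGF_sub_integral [IsProbabilityMeasure μ] {b : ℝ} (hX : MemLp X 2 μ)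
    (hb : ∀ᵐ ω ∂μ, X ω ≤ b) :
    HasSubGammaMGF (fun ω ↦ X ω - μ[X]) (variance X μ) ((b - μ[X]) / 3) μ := by
  have hcentered : MemLp (fun ω ↦ X ω - μ[X]) 2 μ := hX.sub (memLp_const _)
  have hle : ∀ᵐ ω ∂μ, X ω - μ[X] ≤ b - μ[X] := by
    filter_upwards [hb] with ω hω using by linarith
  have hmean : ∫ ω, (X ω - μ[X]) ∂μ = 0 := by
    simp [integral_sub (hX.integrable one_le_two) (integrable_const _)]
  refine ⟨fun t ht _ ↦ integrable_exp_mul_of_le t _ ht hcentered.aemeasurable hle,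
    fun t ht htb ↦ ?_⟩
  have hmgf := mgf_le_exp_of_integral_eq_zero hcentered hmean hle ht (by linarith)
  rwa [variance_sub_const hX.aestronglyMeasurable, mul_div_assoc t] at hmgf

end SubGamma

section Averaging

theorem expect_smul_eq_expect {G Y M : Type*} [Group G] [Fintype G] [MulAction G Y]
    [MulAction.IsPretransitive G Y] [Fintype Y] [AddCommMonoid M] [Module ℚ≥0 M]
    (f : Y → M) (y : Y) : 𝔼 a : G, f (a • y) = 𝔼 z, f z := by
  have : Nonempty Y := ⟨y⟩
  have hconst (z : Y) : 𝔼 a : G, f (a • z) = 𝔼 a : G, f (a • y) := by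
    obtain ⟨b, rfl⟩ := MulAction.exists_smul_eq G y z
    exact Fintype.expect_equiv (Equiv.mulRight b) _ _ fun a ↦ by simp [mul_smul]
  have hinvariant (a : G) : 𝔼 z, f (a • z) = 𝔼 z, f z :=
    Fintype.expect_equiv (MulAction.toPerm a) _ _ fun _ ↦ rfl
  calc 𝔼 a : G, f (a • y) = 𝔼 z, 𝔼 a : G, f (a • z) := by
        simp only [hconst, Fintype.expect_const]
    _ = 𝔼 a : G, 𝔼 z, f (a • z) := Finset.expect_comm _ _ _
    _ = 𝔼 z, f z := by simp only [hinvariant, Fintype.expect_const]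

theorem exists_perm_comp_eq_of_range_eq {ι α : Type*} {x y : ι → α} (hx : x.Injective)
    (hy : y.Injective) (hxy : Set.range x = Set.range y) :
    ∃ σ : Equiv.Perm ι, y ∘ σ = x := by
  refine ⟨(Equiv.ofInjective x hx).trans <| (Equiv.setCongr hxy).trans
    (Equiv.ofInjective y hy).symm, funext fun i ↦ ?_⟩
  simp [Equiv.apply_ofInjective_symm]

end Averaging

section UStatistic

variable {𝒳 : Type*} {m n : ℕ}

/-- The U-statistic of order `m` with kernel `g` at the sample `x`. The `m`-element subsets of the
indices are encoded by their increasing enumerations; the value is `0` when `n < m`. -/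
def uStatistic (g : (Fin m → 𝒳) → ℝ) (x : Fin n → 𝒳) : ℝ :=
  (n.choose m : ℝ)⁻¹ *
    ∑ ι ∈ Finset.univ.filter (fun ι : Fin m → Fin n ↦ StrictMono ι), g (fun i ↦ x (ι i))

theorem uStatistic_eq_expect_powersetCard (g : (Fin m → 𝒳) → ℝ) (x : Fin n → 𝒳) :
    uStatistic g x = 𝔼 s : Set.powersetCard (Fin n) m,
      g (fun i ↦ x (Set.powersetCard.ofFinEmbEquiv.symm s i)) := by
  rw [Fintype.expect_eq_sum_div_card, ← Nat.card_eq_fintype_card, Set.powersetCard.card,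
    Nat.card_fin, uStatistic, inv_mul_eq_div]
  congr 1
  symm
  exact Finset.sum_bij (fun s _ ↦ Set.powersetCard.ofFinEmbEquiv.symm s)
    (fun s _ ↦ by simpa using (Set.powersetCard.ofFinEmbEquiv.symm s).strictMono)
    (fun s _ t _ hst ↦ Set.powersetCard.ofFinEmbEquiv.symm.injective (DFunLike.coe_injective hst))
    (fun ι hι ↦ ⟨Set.powersetCard.ofFinEmbEquiv
      (OrderEmbedding.ofStrictMono ι (Finset.mem_filter.1 hι).2), Finset.mem_univ _, by simp⟩)
    fun _ _ ↦ rfl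

theorem uStatistic_sub_const (hmn : m ≤ n) (g : (Fin m → 𝒳) → ℝ) (θ : ℝ) (x : Fin n → 𝒳) :
    uStatistic (fun y ↦ g y - θ) x = uStatistic g x - θ := by
  have : Nonempty (Set.powersetCard (Fin n) m) :=
    ⟨Set.powersetCard.ofFinEmb m (Fin n) (Fin.castLEEmb hmn)⟩
  simp only [uStatistic_eq_expect_powersetCard, Finset.expect_sub_distrib, Fintype.expect_const]

theorem uStatistic_eq_expect_perm {g : (Fin m → 𝒳) → ℝ}
    (hg : ∀ (σ : Equiv.Perm (Fin m)) (y : Fin m → 𝒳), g (y ∘ σ) = g y) (e : Fin m ↪ Fin n)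
    (x : Fin n → 𝒳) :
    uStatistic g x = 𝔼 ρ : Equiv.Perm (Fin n), g (fun i ↦ x (ρ (e i))) := by
  have := Set.powersetCard.isPretransitive (α := Fin n) (n := m)
  rw [uStatistic_eq_expect_powersetCard,
    ← expect_smul_eq_expect (G := Equiv.Perm (Fin n)) _ (Set.powersetCard.ofFinEmb m (Fin n) e)]
  refine Finset.expect_congr rfl fun ρ _ ↦ ?_
  set s := ρ • Set.powersetCard.ofFinEmb m (Fin n) e
  have hs : s = Set.powersetCard.ofFinEmb m (Fin n) (ρ • e) :=
    ((Set.powersetCard.mulActionHom_of_embedding (Equiv.Perm (Fin n)) (Fin n) m).map_smul ρ e).symm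
  have hrange : Set.range (Set.powersetCard.ofFinEmbEquiv.symm s) = Set.range (ρ ∘ e) := by
    ext i
    rw [Set.powersetCard.mem_range_ofFinEmbEquiv_symm_iff_mem, hs,
      Set.powersetCard.mem_ofFinEmb_iff_mem_range]
    rfl
  obtain ⟨σ, hσ⟩ := exists_perm_comp_eq_of_range_eq
    (Set.powersetCard.ofFinEmbEquiv.symm s).injective (ρ.injective.comp e.injective) hrange
  rw [← hg σ (fun i ↦ x (ρ (e i)))]
  exact congrArg (fun ι ↦ g (x ∘ ι)) hσ.symm

/-- The `n / m` consecutive disjoint blocks of `m` indices below `n`: `(j, i)` is sent to the `i`-th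
index of block `j`. -/
def blockIndex (m n : ℕ) : Fin (n / m) × Fin m ↪ Fin n :=
  finProdFinEquiv.toEmbedding.trans (Fin.castLEEmb (Nat.div_mul_le_self n m))

/-- Hoeffding's block mean: the mean of the kernel over the `n / m` blocks of `blockIndex`, which
replaces the dependent terms of the U-statistic by independent ones. -/
def blockMean (g : (Fin m → 𝒳) → ℝ) (x : Fin n → 𝒳) : ℝ :=
  ((n / m : ℕ) : ℝ)⁻¹ * ∑ j, g (fun i ↦ x (blockIndex m n (j, i)))

theorem uStatistic_eq_expect_blockMean (hm : 0 < m) (hmn : m ≤ n) {g : (Fin m → 𝒳) → ℝ}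
    (hg : ∀ (σ : Equiv.Perm (Fin m)) (y : Fin m → 𝒳), g (y ∘ σ) = g y) (x : Fin n → 𝒳) :
    uStatistic g x = 𝔼 ρ : Equiv.Perm (Fin n), blockMean g (x ∘ ρ) := by
  have hblock (j : Fin (n / m)) :
      𝔼 ρ : Equiv.Perm (Fin n), g (fun i ↦ x (ρ (blockIndex m n (j, i)))) = uStatistic g x :=
    (uStatistic_eq_expect_perm hg
      ((Function.Embedding.sectR j (Fin m)).trans (blockIndex m n)) x).symm
  have hk : ((n / m : ℕ) : ℝ) ≠ 0 := by exact_mod_cast (Nat.div_pos hmn hm).ne'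
  simp only [blockMean, Function.comp_apply, ← Finset.mul_expect, Finset.expect_sum_comm, hblock]
  simp [hk]

end UStatistic

section Independence

variable {Ω : Type*} [MeasurableSpace Ω] {P : Measure Ω} {𝒳 : Type*} [MeasurableSpace 𝒳]

theorem iIndepFun_curry {ι κ : Type*} {X : ι × κ → Ω → 𝒳}
    (hmeas : ∀ p, Measurable (X p)) (hindep : iIndepFun X P) :
    iIndepFun (fun i ω j ↦ X (i, j) ω) P := by
  have := hindep.isProbabilityMeasure
  have hrow (i : ι) : iIndepFun (fun j ↦ X (i, j)) P :=
    hindep.precomp (Prod.mk_right_injective i)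
  have (i : ι) (j : κ) : IsProbabilityMeasure (P.map (X (i, j))) :=
    Measure.isProbabilityMeasure_map (hmeas _).aemeasurable
  have hcurry : MeasurableEquiv.curry ι κ 𝒳 ∘ (fun ω p ↦ X p ω) = fun ω i j ↦ X (i, j) ω := rfl
  rw [iIndepFun_iff_map_fun_eq_infinitePi_map (by fun_prop), ← hcurry,
    ← Measure.map_map (by fun_prop) (by fun_prop), hindep.map_fun_eq_infinitePi_map hmeas,
    Measure.infinitePi_map_curry (fun i j ↦ P.map (X (i, j)))]
  congrm Measure.infinitePi fun i ↦ ?_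
  exact ((hrow i).map_fun_eq_infinitePi_map fun j ↦ hmeas (i, j)).symm

theorem identDistrib_subfamily {ι κ : Type*} [Countable κ] {X : ι → Ω → 𝒳}
    (hindep : iIndepFun X P) (hident : ∀ i j, IdentDistrib (X i) (X j) P P) (e e' : κ ↪ ι) :
    IdentDistrib (fun ω k ↦ X (e k) ω) (fun ω k ↦ X (e' k) ω) P P :=
  .pi (fun _ ↦ hident _ _) (hindep.precomp e.injective) (hindep.precomp e'.injective)

end Independence

section BlockMean

variable {Ω : Type*} [MeasurableSpace Ω] {P : Measure Ω} {𝒳 : Type*} [MeasurableSpace 𝒳]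
  {m n : ℕ} {X : Fin n → Ω → 𝒳} {g : (Fin m → 𝒳) → ℝ} {v c : ℝ}

theorem measurable_blockMean (hg : Measurable g) :
    Measurable (blockMean g : (Fin n → 𝒳) → ℝ) := by
  unfold blockMean
  fun_prop

theorem HasSubGammaMGF.blockMean (hm : 0 < m) (hX : ∀ i, Measurable (X i))
    (hindep : iIndepFun X P) (hident : ∀ i j, IdentDistrib (X i) (X j) P P) (hg : Measurable g)
    (e : Fin m ↪ Fin n) (h : HasSubGammaMGF (fun ω ↦ g fun i ↦ X (e i) ω) v c P) :
    HasSubGammaMGF (fun ω ↦ blockMean g (X · ω)) (v / (n / m : ℕ)) (c / (n / m : ℕ)) P := by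
  have := hindep.isProbabilityMeasure
  have hmn : m ≤ n := by simpa using Fintype.card_le_of_embedding e
  have hk : ((n / m : ℕ) : ℝ) ≠ 0 := by exact_mod_cast (Nat.div_pos hmn hm).ne'
  let block (j : Fin (n / m)) : Fin m ↪ Fin n :=
    (Function.Embedding.sectR j (Fin m)).trans (blockIndex m n)
  have hblocks : iIndepFun (fun j ω ↦ g fun i ↦ X (block j i) ω) P :=
    (iIndepFun_curry (fun p ↦ hX (blockIndex m n p))
      (hindep.precomp (blockIndex m n).injective)).comp (fun _ ↦ g) fun _ ↦ hg
  have hblock (j : Fin (n / m)) : HasSubGammaMGF (fun ω ↦ g fun i ↦ X (block j i) ω) v c P :=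
    h.of_identDistrib ((identDistrib_subfamily hindep hident e (block j)).comp hg)
  have hv : v / (n / m : ℕ) = ((n / m : ℕ) : ℝ)⁻¹ ^ 2 * ∑ _j : Fin (n / m), v := by
    simp only [Finset.sum_const, Finset.card_univ, Fintype.card_fin, nsmul_eq_mul]
    field_simp
  rw [hv, div_eq_inv_mul c]
  exact (HasSubGammaMGF.sum_of_iIndepFun hblocks (fun j ↦ hg.comp (by fun_prop))
    fun j _ ↦ hblock j).const_mul (by positivity)

theorem HasSubGammaMGF.uStatistic (hm : 0 < m) (hX : ∀ i, Measurable (X i))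
    (hindep : iIndepFun X P) (hident : ∀ i j, IdentDistrib (X i) (X j) P P) (hg : Measurable g)
    (hsymm : ∀ (σ : Equiv.Perm (Fin m)) (y : Fin m → 𝒳), g (y ∘ σ) = g y)
    (e : Fin m ↪ Fin n) (h : HasSubGammaMGF (fun ω ↦ g fun i ↦ X (e i) ω) v c P) :
    HasSubGammaMGF (fun ω ↦ uStatistic g (X · ω)) (v / (n / m : ℕ)) (c / (n / m : ℕ)) P := by
  have hmn : m ≤ n := by simpa using Fintype.card_le_of_embedding e
  simp only [uStatistic_eq_expect_blockMean hm hmn hsymm]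
  refine .expect (fun ρ ↦ ((measurable_blockMean hg).comp (by fun_prop)).aemeasurable) fun ρ ↦ ?_
  -- `ρ⁻¹ ∘ e` selects from `X ∘ ρ` the variables that `e` selects from `X`.
  refine .blockMean (X := fun i ↦ X (ρ i)) hm (fun i ↦ hX (ρ i))
    (hindep.precomp ρ.injective) (fun i j ↦ hident (ρ i) (ρ j)) hg (e.trans ρ.symm.toEmbedding) ?_
  simpa using h

end BlockMean

theorem berk_inequality_general {Ω : Type*} [MeasurableSpace Ω] {P : Measure Ω}
    {𝒳 : Type*} [MeasurableSpace 𝒳] {m n : ℕ} (hm : 0 < m) (hmn : m ≤ n)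
    {X : Fin n → Ω → 𝒳} (hX : ∀ i, Measurable (X i)) (hindep : iIndepFun X P)
    (hident : ∀ i j, IdentDistrib (X i) (X j) P P)
    {g : (Fin m → 𝒳) → ℝ} (hg : Measurable g)
    (hsymm : ∀ (σ : Equiv.Perm (Fin m)) (y : Fin m → 𝒳), g (y ∘ σ) = g y) {b : ℝ}
    (hL2 : MemLp (fun ω ↦ g fun k ↦ X (Fin.castLE hmn k) ω) 2 P)
    (hb : ∀ᵐ ω ∂P, g (fun k ↦ X (Fin.castLE hmn k) ω) ≤ b) {t : ℝ} (ht : 0 < t) :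
    P {ω | (∫ ω', g (fun k ↦ X (Fin.castLE hmn k) ω') ∂P) + t ≤ uStatistic g (X · ω)} ≤
      ENNReal.ofReal (exp (-((n / m : ℕ) * t ^ 2) /
        (2 * variance (fun ω' ↦ g fun k ↦ X (Fin.castLE hmn k) ω') P +
          (2 / 3) * (b - ∫ ω', g (fun k ↦ X (Fin.castLE hmn k) ω') ∂P) * t))) := by
  have := hindep.isProbabilityMeasure
  set θ := ∫ ω', g (fun k ↦ X (Fin.castLE hmn k) ω') ∂P
  set v := variance (fun ω' ↦ g fun k ↦ X (Fin.castLE hmn k) ω') P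
  have hθb : 0 ≤ b - θ := sub_nonneg.2 (integral_le_of_ae_le (hL2.integrable one_le_two) hb)
  have hk : ((n / m : ℕ) : ℝ) ≠ 0 := by exact_mod_cast (Nat.div_pos hmn hm).ne'
  have hU : HasSubGammaMGF (fun ω ↦ uStatistic g (X · ω) - θ)
      (v / (n / m : ℕ)) ((b - θ) / 3 / (n / m : ℕ)) P := by
    simp only [← uStatistic_sub_const hmn g θ]
    exact .uStatistic hm hX hindep hident (hg.sub_const θ) (fun σ y ↦ by rw [hsymm])
      (Fin.castLEEmb hmn) (hasSubGammaMGF_sub_integral hL2 hb)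
  have hexponent : -t ^ 2 / (2 * (v / (n / m : ℕ) + (b - θ) / 3 / (n / m : ℕ) * t)) =
      -((n / m : ℕ) * t ^ 2) / (2 * v + 2 / 3 * (b - θ) * t) := by
    rw [← mul_div_mul_left (-t ^ 2) _ hk]
    congr 1
    · ring
    · field_simp
  rw [← hexponent, ← ofReal_measureReal]
  simp only [← le_sub_iff_add_le']
  exact ENNReal.ofReal_le_ofReal
    (hU.measure_ge_le (div_nonneg (variance_nonneg _ _) (by positivity)) (by positivity) ht)

/-- Berk's inequality for U-statistics, Lemma 8 of the paper. -/
theorem berk_inequality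
    {Ω : Type*} [MeasurableSpace Ω] (P : Measure Ω) [IsProbabilityMeasure P]
    {𝒳 : Type*} [MeasurableSpace 𝒳]
    (m n : ℕ) (hm : 0 < m) (hn : 0 < n) (hmn : m ≤ n)
    (X : ℕ → Ω → 𝒳) (hXmeas : ∀ i, Measurable (X i))
    -- the `X_i` are i.i.d.
    (hindep : iIndepFun X P)
    (hident : ∀ i, Measure.map (X i) P = Measure.map (X 0) P)
    (g : (Fin m → 𝒳) → ℝ) (hgmeas : Measurable g)
    (a b : ℝ) (hab : ∀ x, g x ∈ Set.Icc a b)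
    -- `g` is symmetric
    (hgsymm : ∀ (σ : Equiv.Perm (Fin m)) (x : Fin m → 𝒳), g (x ∘ σ) = g x) :
    ∀ t : ℝ, 0 < t →
      P {ω | (∫ ω', g (fun k => X (k : ℕ) ω') ∂P) + t ≤
          ((n.choose m : ℕ) : ℝ)⁻¹ *
            ∑ ι ∈ Finset.univ.filter (fun ι : Fin m → Fin n => StrictMono ι),
              g (fun k => X ((ι k : Fin n) : ℕ) ω)}
        ≤ ENNReal.ofReal (Real.exp (- (((n / m : ℕ) : ℝ) * t ^ 2) /
            (2 * variance (fun ω' => g (fun k => X (k : ℕ) ω')) P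
              + (2 / 3) * (b - ∫ ω', g (fun k => X (k : ℕ) ω') ∂P) * t))) := by
  intro t ht
  have hident' (i j : Fin n) : IdentDistrib (X i) (X j) P P :=
    ⟨(hXmeas i).aemeasurable, (hXmeas j).aemeasurable, (hident i).trans (hident j).symm⟩
  exact berk_inequality_general (X := fun i : Fin n ↦ X i) hm hmn (fun i ↦ hXmeas i)
    (hindep.precomp Fin.val_injective) hident' hgmeas hgsymm
    (memLp_of_bounded (ae_of_all _ fun ω ↦ hab _)
      (hgmeas.comp (by fun_prop)).aestronglyMeasurable 2)
    (ae_of_all _ fun ω ↦ (hab _).2) ht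
end
end
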